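/- arXiv:2303.03754 — 3 statements merged into one kernel-verified Lean document; each statement's English description precedes it below -/
import Mathlib

section
/- Let δ ∈ ℝ, let τ > 0, and let G : ℝ → ℂ be twice continuously differentiable on [0, τ] with |G(s)| ≤ M₀, |G'(s)| ≤ M₁ and |G''(s)| ≤ M₂ for all s ∈ [0, τ]. Then |(τ/2)·(G(τ) + e^{iτδ} G(0)) − ∫₀^τ e^{i(τ−s)δ} G(s) ds| ≤ (τ³/12)·(M₂ + 2|δ| M₁ + δ² M₀). -/
open Complex

/-!
As a function of `s`, the phase `e^{i(b-s)δ}` is unimodular and satisfies `u' = -iδ u`, so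
differentiating `e^{i(b-s)δ} G(s)` replaces `G` by `G' - iδ G`. Doing this twice bounds the second
derivative of the integrand by `M₂ + 2|δ|M₁ + δ²M₀`, which the trapezoidal error bound turns into
the estimate.
-/

section Trapezoidal

open scoped Interval

variable {a b C : ℝ}

theorem iteratedDerivWithin_two_eq_of_hasDerivWithinAt {𝕜 F : Type*} [NontriviallyNormedField 𝕜]
    [NormedAddCommGroup F] [NormedSpace 𝕜 F] {f f' : 𝕜 → F} {f'' : F} {s : Set 𝕜} {x : 𝕜}
    (hs : UniqueDiffOn 𝕜 s) (hx : x ∈ s) (hf : ∀ y ∈ s, HasDerivWithinAt f (f' y) s y)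
    (hf' : HasDerivWithinAt f' f'' s x) : iteratedDerivWithin 2 f s x = f'' := by
  have derivWithin_eq : Set.EqOn (derivWithin f s) f' s := fun y hy =>
    (hf y hy).derivWithin (hs y hy)
  rw [iteratedDerivWithin_succ, iteratedDerivWithin_one,
    derivWithin_congr derivWithin_eq (derivWithin_eq hx), hf'.derivWithin (hs x hx)]

theorem trapezoidal_error_le_of_hasDerivWithinAt {f f' f'' : ℝ → ℝ}
    (hf : ∀ x ∈ [[a, b]], HasDerivWithinAt f (f' x) [[a, b]] x)
    (hf' : ∀ x ∈ [[a, b]], HasDerivWithinAt f' (f'' x) [[a, b]] x)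
    (hC : ∀ x ∈ [[a, b]], |f'' x| ≤ C) {N : ℕ} (hN : 0 < N) :
    |trapezoidal_error f N a b| ≤ |b - a| ^ 3 * C / (12 * N ^ 2) := by
  rcases eq_or_ne a b with rfl | hab
  · simp
  have hs : UniqueDiffOn ℝ [[a, b]] := uniqueDiffOn_uIcc hab
  have differentiableOn_derivWithin : DifferentiableOn ℝ (derivWithin f [[a, b]]) [[a, b]] :=
    DifferentiableOn.congr (fun x hx => (hf' x hx).differentiableWithinAt)
      fun x hx => (hf x hx).derivWithin (hs x hx)
  refine trapezoidal_error_le (fun x hx => (hf x hx).differentiableWithinAt)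
    differentiableOn_derivWithin (fun x => ?_) hN
  by_cases hx : x ∈ [[a, b]]
  · rw [iteratedDerivWithin_two_eq_of_hasDerivWithinAt hs hx hf (hf' x hx)]
    exact hC x hx
  · have hx_closure : x ∉ closure [[a, b]] := by rwa [isCompact_uIcc.isClosed.closure_eq]
    rw [iteratedDerivWithin_succ, derivWithin_zero_of_notMem_closure hx_closure, abs_zero]
    exact (abs_nonneg _).trans (hC a Set.left_mem_uIcc)

theorem norm_trapezoidal_sub_integral_le_of_hasDerivWithinAt {E : Type*} [NormedAddCommGroup E]
    [NormedSpace ℝ E] [CompleteSpace E] {f f' f'' : ℝ → E}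
    (hf : ∀ x ∈ [[a, b]], HasDerivWithinAt f (f' x) [[a, b]] x)
    (hf' : ∀ x ∈ [[a, b]], HasDerivWithinAt f' (f'' x) [[a, b]] x)
    (hC : ∀ x ∈ [[a, b]], ‖f'' x‖ ≤ C) :
    ‖((b - a) / 2) • (f a + f b) - ∫ x in a..b, f x‖ ≤ |b - a| ^ 3 / 12 * C := by
  -- A norming functional reduces the estimate to scalar-valued functions.
  obtain ⟨φ, hφ, hφ_error⟩ :=
    exists_dual_vector'' ℝ (((b - a) / 2) • (f a + f b) - ∫ x in a..b, f x)
  have f_integrable : IntervalIntegrable f MeasureTheory.volume a b :=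
    ContinuousOn.intervalIntegrable fun x hx => (hf x hx).continuousWithinAt
  have φ_error : φ (((b - a) / 2) • (f a + f b) - ∫ x in a..b, f x) =
      trapezoidal_error (φ ∘ f) 1 a b := by
    simp only [trapezoidal_error, trapezoidal_integral_one, map_sub, map_smul, map_add,
      smul_eq_mul, Function.comp_apply, φ.intervalIntegral_comp_comm f_integrable]
  have φ_bound : ∀ x ∈ [[a, b]], |φ (f'' x)| ≤ C := fun x hx =>
    (φ.le_of_opNorm_le hφ (f'' x)).trans (by simpa only [one_mul] using hC x hx)
  calc ‖((b - a) / 2) • (f a + f b) - ∫ x in a..b, f x‖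
      = trapezoidal_error (φ ∘ f) 1 a b := hφ_error.symm.trans φ_error
    _ ≤ |b - a| ^ 3 * C / (12 * (1 : ℕ) ^ 2) := (le_abs_self _).trans <|
        trapezoidal_error_le_of_hasDerivWithinAt
          (fun x hx => φ.hasFDerivAt.comp_hasDerivWithinAt x (hf x hx))
          (fun x hx => φ.hasFDerivAt.comp_hasDerivWithinAt x (hf' x hx)) φ_bound one_pos
    _ = |b - a| ^ 3 / 12 * C := by push_cast; ring

end Trapezoidal

theorem norm_sub_smul_sub_smul_sub_smul_le {𝕜 F : Type*} [NormedField 𝕜]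
    [SeminormedAddCommGroup F] [NormedSpace 𝕜 F] (c : 𝕜) {x y z : F} {M₀ M₁ M₂ : ℝ}
    (hx : ‖x‖ ≤ M₀) (hy : ‖y‖ ≤ M₁) (hz : ‖z‖ ≤ M₂) :
    ‖z - c • y - c • (y - c • x)‖ ≤ M₂ + 2 * ‖c‖ * M₁ + ‖c‖ ^ 2 * M₀ :=
  calc ‖z - c • y - c • (y - c • x)‖
      ≤ ‖z‖ + ‖c‖ * ‖y‖ + ‖c‖ * (‖y‖ + ‖c‖ * ‖x‖) := by
        grw [norm_sub_le, norm_sub_le, norm_smul, norm_smul, norm_sub_le, norm_smul]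
    _ ≤ M₂ + ‖c‖ * M₁ + ‖c‖ * (M₁ + ‖c‖ * M₀) := by gcongr
    _ = M₂ + 2 * ‖c‖ * M₁ + ‖c‖ ^ 2 * M₀ := by ring

section SingleMode

open scoped Interval

theorem norm_exp_I_mul_sub_mul (δ b s : ℝ) : ‖exp (I * (b - s) * δ)‖ = 1 := by
  rw [show I * (b - s) * δ = I * ((b - s) * δ : ℝ) by push_cast; ring, norm_exp_I_mul_ofReal]

theorem hasDerivAt_exp_I_mul_sub_mul (δ b s : ℝ) :
    HasDerivAt (fun s : ℝ => exp (I * (b - s) * δ)) (-(exp (I * (b - s) * δ) * (I * δ))) s := by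
  refine ((((hasDerivAt_id s).ofReal_comp.const_sub (b : ℂ)).const_mul I).mul_const
    (δ : ℂ)).cexp.congr_deriv ?_
  simp only [id, ofReal_one]
  ring

variable {E : Type*} [NormedAddCommGroup E] [NormedSpace ℂ E]

theorem hasDerivWithinAt_exp_I_mul_sub_mul_smul {g : ℝ → E} {g' : E} {S : Set ℝ} {s : ℝ}
    (δ b : ℝ) (hg : HasDerivWithinAt g g' S s) :
    HasDerivWithinAt (fun s : ℝ => exp (I * (b - s) * δ) • g s)
      (exp (I * (b - s) * δ) • (g' - (I * δ) • g s)) S s := by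
  refine ((hasDerivAt_exp_I_mul_sub_mul δ b s).hasDerivWithinAt.smul hg).congr_deriv ?_
  module

theorem ewi_local_error_single_mode_general [CompleteSpace E] (δ a b : ℝ) {M₀ M₁ M₂ : ℝ}
    {G G' G'' : ℝ → E}
    (hG : ∀ s ∈ [[a, b]], HasDerivWithinAt G (G' s) [[a, b]] s)
    (hG' : ∀ s ∈ [[a, b]], HasDerivWithinAt G' (G'' s) [[a, b]] s)
    (hM₀ : ∀ s ∈ [[a, b]], ‖G s‖ ≤ M₀)
    (hM₁ : ∀ s ∈ [[a, b]], ‖G' s‖ ≤ M₁)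
    (hM₂ : ∀ s ∈ [[a, b]], ‖G'' s‖ ≤ M₂) :
    ‖((b - a) / 2) • (G b + exp (I * (b - a) * δ) • G a)
        - ∫ s in a..b, exp (I * (b - s) * δ) • G s‖
      ≤ |b - a| ^ 3 / 12 * (M₂ + 2 * |δ| * M₁ + δ ^ 2 * M₀) := by
  have norm_Iδ : ‖I * (δ : ℂ)‖ = |δ| := by
    rw [norm_mul, norm_I, one_mul, norm_real, Real.norm_eq_abs]
  have second_deriv_bound : ∀ s ∈ [[a, b]],
      ‖exp (I * (b - s) * δ) • (G'' s - (I * δ : ℂ) • G' s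
        - (I * δ : ℂ) • (G' s - (I * δ : ℂ) • G s))‖ ≤ M₂ + 2 * |δ| * M₁ + δ ^ 2 * M₀ := by
    intro s hs
    rw [norm_smul, norm_exp_I_mul_sub_mul, one_mul, ← sq_abs δ, ← norm_Iδ]
    exact norm_sub_smul_sub_smul_sub_smul_le _ (hM₀ s hs) (hM₁ s hs) (hM₂ s hs)
  have trapezoidal_bound := norm_trapezoidal_sub_integral_le_of_hasDerivWithinAt
    (fun s hs => hasDerivWithinAt_exp_I_mul_sub_mul_smul δ b (hG s hs))
    (fun s hs => hasDerivWithinAt_exp_I_mul_sub_mul_smul δ b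
      ((hG' s hs).sub ((hG s hs).const_smul (I * δ : ℂ))))
    second_deriv_bound
  simpa only [sub_self, mul_zero, zero_mul, exp_zero, one_smul, add_comm] using trapezoidal_bound

end SingleMode

/-- Single-Fourier-mode local truncation error of the Deuflhard-type exponential
wave integrator: for `G` twice continuously differentiable on `[0, τ]` with
`|G| ≤ M₀`, `|G'| ≤ M₁`, `|G''| ≤ M₂` there,
`|(τ/2)(G(τ) + e^{iτδ}G(0)) − ∫₀^τ e^{i(τ−s)δ} G(s) ds| ≤ (τ³/12)(M₂ + 2|δ|M₁ + δ²M₀)`. -/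
theorem ewi_local_error_single_mode
    (δ τ : ℝ) (hτ : 0 < τ) (M₀ M₁ M₂ : ℝ) (G G' G'' : ℝ → ℂ)
    (hG : ∀ s ∈ Set.Icc (0 : ℝ) τ, HasDerivWithinAt G (G' s) (Set.Icc 0 τ) s)
    (hG' : ∀ s ∈ Set.Icc (0 : ℝ) τ, HasDerivWithinAt G' (G'' s) (Set.Icc 0 τ) s)
    (hG'' : ContinuousOn G'' (Set.Icc 0 τ))
    (hb0 : ∀ s ∈ Set.Icc (0 : ℝ) τ, ‖G s‖ ≤ M₀)
    (hb1 : ∀ s ∈ Set.Icc (0 : ℝ) τ, ‖G' s‖ ≤ M₁)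
    (hb2 : ∀ s ∈ Set.Icc (0 : ℝ) τ, ‖G'' s‖ ≤ M₂) :
    ‖(τ / 2 : ℂ) * (G τ + Complex.exp (Complex.I * τ * δ) * G 0)
        - ∫ s in (0 : ℝ)..τ, Complex.exp (Complex.I * (τ - s) * δ) * G s‖
      ≤ (τ ^ 3 / 12) * (M₂ + 2 * |δ| * M₁ + δ ^ 2 * M₀) := by
  rw [← Set.uIcc_of_le hτ.le] at hG hG' hb0 hb1 hb2
  simpa [abs_of_pos hτ, mul_add] using
    ewi_local_error_single_mode_general δ 0 τ hG hG' hb0 hb1 hb2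
end

section
/- Let b > a be real numbers, β > 0, α ∈ (1,2], τ₀ ∈ (0,1), and γ ∈ (0,1). Set μ_l = 2πl/(b−a) and δ_l = √(β + |μ_l|^α) for l ∈ ℤ, let N₀ = 2⌈1/τ₀⌉ and T_{N₀} = {−N₀/2, −N₀/2 + 1, …, N₀/2 − 1}. If 0 < τ ≤ γ π (b−a)^{α/2} τ₀^{α/2} / (2 √(β τ₀^α (b−a)^α + 2^α π^α (1+τ₀)^α)), then for all l, l₁, l₂, l₃ ∈ T_{N₀}, (τ/2)·|δ_l − δ_{l₁} − δ_{l₂} − δ_{l₃}| ≤ γπ. -/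
open Real

/-!
Dividing numerator and denominator of the step-size threshold by `(τ₀ (b - a))^(α/2)` turns it into
`γπ / (2 ω(K))`, where `ω(ξ) = √(β + |ξ|^α)` and `K = 2π(1 + τ₀) / (τ₀ (b - a))`.
Since `⌈1 / τ₀⌉ ≤ 1 / τ₀ + 1`, the number `K` dominates every frequency below the cut-off, so each
`δ_l` lies in `[0, ω(K)]`. The combination `δ_l - δ_{l₁} - δ_{l₂} - δ_{l₃}` then lies in
`[-3 ω(K), ω(K)]`, and the phase per step is at most `(3/4) γπ`.
-/

theorem abs_sub_sub_sub_le_three_mul {R : Type*} [CommRing R] [LinearOrder R]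
    [IsStrictOrderedRing R] {x x₁ x₂ x₃ M : R} (hx : x ∈ Set.Icc 0 M) (hx₁ : x₁ ∈ Set.Icc 0 M)
    (hx₂ : x₂ ∈ Set.Icc 0 M) (hx₃ : x₃ ∈ Set.Icc 0 M) :
    |x - x₁ - x₂ - x₃| ≤ 3 * M := by
  simp only [Set.mem_Icc] at hx hx₁ hx₂ hx₃
  exact abs_le.2 ⟨by linarith, by linarith⟩

/-- The dispersion relation `ω(ξ) = √(β + |ξ|^α)` as a function of a real frequency, so that
`δ_l = ω(μ_l)`. -/
noncomputable def dispersion (β α ξ : ℝ) : ℝ :=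
  √(β + |ξ| ^ α)

section Dispersion

variable {β α ξ η c : ℝ}

theorem dispersion_nonneg : 0 ≤ dispersion β α ξ :=
  sqrt_nonneg _

theorem dispersion_pos (hβ : 0 ≤ β) (hξ : ξ ≠ 0) : 0 < dispersion β α ξ :=
  sqrt_pos.2 (add_pos_of_nonneg_of_pos hβ (rpow_pos_of_pos (abs_pos.2 hξ) α))

theorem dispersion_le_dispersion (hα : 0 ≤ α) (h : |ξ| ≤ |η|) :
    dispersion β α ξ ≤ dispersion β α η := by
  unfold dispersion
  gcongr

theorem rpow_half_mul_dispersion (hc : 0 ≤ c) :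
    c ^ (α / 2) * dispersion β α ξ = √(β * c ^ α + (c * |ξ|) ^ α) := by
  have h_sqrt : c ^ (α / 2) = √(c ^ α) := by
    rw [sqrt_eq_rpow, ← rpow_mul hc, mul_one_div]
  rw [h_sqrt, dispersion, ← sqrt_mul (rpow_nonneg hc α), mul_rpow hc (abs_nonneg ξ), mul_add,
    mul_comm (c ^ α) β]

end Dispersion

/-- The upper bound `K = 2π(1 + τ₀) / (τ₀ L)` for the Fourier frequencies `|2πl / L|` of an
interval of length `L` with `|l| ≤ ⌈1 / τ₀⌉`. -/
noncomputable def cutoffFrequency (L τ₀ : ℝ) : ℝ :=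
  2 * π * (1 + τ₀) / (τ₀ * L)

section CutoffFrequency

variable {L τ₀ : ℝ}

theorem cutoffFrequency_pos (hL : 0 < L) (hτ₀ : 0 < τ₀) : 0 < cutoffFrequency L τ₀ := by
  unfold cutoffFrequency
  positivity

theorem abs_fourier_frequency_le_cutoffFrequency (hL : 0 < L) (hτ₀ : 0 < τ₀) {l : ℤ}
    (hl : |l| ≤ ⌈1 / τ₀⌉) : |2 * π * l / L| ≤ cutoffFrequency L τ₀ := by
  have h_mode : |(l : ℝ)| ≤ 1 / τ₀ + 1 :=
    calc |(l : ℝ)| ≤ ⌈1 / τ₀⌉ := by exact_mod_cast hl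
      _ ≤ 1 / τ₀ + 1 := (Int.ceil_lt_add_one _).le
  calc |2 * π * l / L| = 2 * π * |(l : ℝ)| / L := by
        rw [abs_div, abs_mul, abs_of_pos two_pi_pos, abs_of_pos hL]
    _ ≤ 2 * π * (1 / τ₀ + 1) / L := by gcongr
    _ = cutoffFrequency L τ₀ := by
        unfold cutoffFrequency
        field_simp

theorem rpow_half_mul_dispersion_cutoffFrequency (hL : 0 < L) (hτ₀ : 0 < τ₀) (β α : ℝ) :
    L ^ (α / 2) * τ₀ ^ (α / 2) * dispersion β α (cutoffFrequency L τ₀) =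
      √(β * τ₀ ^ α * L ^ α + 2 ^ α * π ^ α * (1 + τ₀) ^ α) := by
  have h_cancel : τ₀ * L * |cutoffFrequency L τ₀| = 2 * π * (1 + τ₀) := by
    rw [abs_of_pos (cutoffFrequency_pos hL hτ₀), cutoffFrequency]
    field_simp
  rw [mul_comm (L ^ (α / 2)), ← mul_rpow hτ₀.le hL.le,
    rpow_half_mul_dispersion (by positivity), h_cancel, mul_rpow hτ₀.le hL.le,
    mul_rpow two_pi_pos.le (by positivity), mul_rpow zero_le_two pi_pos.le, mul_assoc β]

theorem step_threshold_eq_div_dispersion (hL : 0 < L) (hτ₀ : 0 < τ₀) (β α γ : ℝ) :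
    γ * π * L ^ (α / 2) * τ₀ ^ (α / 2) /
        (2 * √(β * τ₀ ^ α * L ^ α + 2 ^ α * π ^ α * (1 + τ₀) ^ α)) =
      γ * π / (2 * dispersion β α (cutoffFrequency L τ₀)) := by
  have h_scale : L ^ (α / 2) * τ₀ ^ (α / 2) ≠ 0 := by positivity
  rw [← rpow_half_mul_dispersion_cutoffFrequency hL hτ₀, mul_assoc (γ * π), mul_left_comm 2,
    mul_comm (γ * π), mul_div_mul_left _ _ h_scale]

end CutoffFrequency

theorem phase_per_step_le_general
    {a b β α τ₀ γ : ℝ} (hab : a < b) (hβ : 0 ≤ β) (hα : 0 ≤ α) (hτ₀ : 0 < τ₀)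
    {μ : ℤ → ℝ} (hμ : ∀ l : ℤ, μ l = 2 * π * l / (b - a))
    {δ : ℤ → ℝ} (hδ : ∀ l : ℤ, δ l = √(β + |μ l| ^ α))
    {τ : ℝ} (hτ_nonneg : 0 ≤ τ)
    (hτ : τ ≤ γ * π * (b - a) ^ (α / 2) * τ₀ ^ (α / 2) /
        (2 * √(β * τ₀ ^ α * (b - a) ^ α + 2 ^ α * π ^ α * (1 + τ₀) ^ α)))
    {l l₁ l₂ l₃ : ℤ} (hl : |l| ≤ ⌈1 / τ₀⌉) (hl₁ : |l₁| ≤ ⌈1 / τ₀⌉)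
    (hl₂ : |l₂| ≤ ⌈1 / τ₀⌉) (hl₃ : |l₃| ≤ ⌈1 / τ₀⌉) :
    (τ / 2) * |δ l - δ l₁ - δ l₂ - δ l₃| ≤ 3 / 4 * (γ * π) := by
  have hL : 0 < b - a := sub_pos.2 hab
  have hK : 0 < cutoffFrequency (b - a) τ₀ := cutoffFrequency_pos hL hτ₀
  set M := dispersion β α (cutoffFrequency (b - a) τ₀)
  have hM : 0 < M := dispersion_pos hβ hK.ne'
  have hτM : τ * (2 * M) ≤ γ * π := by
    rwa [step_threshold_eq_div_dispersion hL hτ₀, le_div_iff₀ (by positivity)] at hτ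
  have hδ_mem : ∀ k : ℤ, |k| ≤ ⌈1 / τ₀⌉ → δ k ∈ Set.Icc 0 M := fun k hk ↦ by
    rw [hδ k, hμ k]
    exact ⟨dispersion_nonneg, dispersion_le_dispersion hα <|
      (abs_fourier_frequency_le_cutoffFrequency hL hτ₀ hk).trans (le_abs_self _)⟩
  calc τ / 2 * |δ l - δ l₁ - δ l₂ - δ l₃| ≤ τ / 2 * (3 * M) := by
        gcongr
        exact abs_sub_sub_sub_le_three_mul (hδ_mem l hl) (hδ_mem l₁ hl₁) (hδ_mem l₂ hl₂)
          (hδ_mem l₃ hl₃)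
    _ = 3 / 4 * (τ * (2 * M)) := by ring
    _ ≤ 3 / 4 * (γ * π) := by gcongr

/-- Implication (3.1.29): under the step-size restriction
`0 < τ ≤ γπ(b−a)^{α/2}τ₀^{α/2} / (2√(βτ₀^α(b−a)^α + 2^α π^α (1+τ₀)^α))`,
the accumulated phase per step satisfies
`(τ/2)|δ_l − δ_{l₁} − δ_{l₂} − δ_{l₃}| ≤ γπ` for all low-frequency modes
`l, l₁, l₂, l₃ ∈ T_{N₀}`. -/
theorem phase_per_step_le
    (a b β α τ₀ γ : ℝ) (hab : a < b) (hβ : 0 < β) (hα1 : 1 < α) (hα2 : α ≤ 2)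
    (hτ₀0 : 0 < τ₀) (hτ₀1 : τ₀ < 1) (hγ0 : 0 < γ) (hγ1 : γ < 1)
    (μ : ℤ → ℝ) (hμ : ∀ l : ℤ, μ l = 2 * Real.pi * l / (b - a))
    (δ : ℤ → ℝ) (hδ : ∀ l : ℤ, δ l = Real.sqrt (β + |μ l| ^ α))
    (N₀ : ℤ) (hN₀ : N₀ = 2 * ⌈1 / τ₀⌉)
    (τ : ℝ) (hτ0 : 0 < τ)
    (hτ : τ ≤ γ * Real.pi * (b - a) ^ (α / 2) * τ₀ ^ (α / 2) /
        (2 * Real.sqrt (β * τ₀ ^ α * (b - a) ^ α +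
          2 ^ α * Real.pi ^ α * (1 + τ₀) ^ α)))
    (l l₁ l₂ l₃ : ℤ)
    (hl : -(N₀ / 2) ≤ l ∧ l ≤ N₀ / 2 - 1)
    (hl₁ : -(N₀ / 2) ≤ l₁ ∧ l₁ ≤ N₀ / 2 - 1)
    (hl₂ : -(N₀ / 2) ≤ l₂ ∧ l₂ ≤ N₀ / 2 - 1)
    (hl₃ : -(N₀ / 2) ≤ l₃ ∧ l₃ ≤ N₀ / 2 - 1) :
    (τ / 2) * |δ l - δ l₁ - δ l₂ - δ l₃| ≤ γ * Real.pi := by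
  have h_abs : ∀ k : ℤ, -(N₀ / 2) ≤ k ∧ k ≤ N₀ / 2 - 1 → |k| ≤ ⌈1 / τ₀⌉ :=
    fun k hk ↦ abs_le.2 (by omega)
  exact (phase_per_step_le_general hab hβ.le (by linarith) hτ₀0 hμ hδ hτ0.le hτ (h_abs l hl)
    (h_abs l₁ hl₁) (h_abs l₂ hl₂) (h_abs l₃ hl₃)).trans
    (mul_le_of_le_one_left (by positivity) (by norm_num))
end

section
/- Let γ ∈ (0,1) be a fixed constant, let τ > 0 and δ ∈ ℝ satisfy 0 < τ|δ|/2 ≤ γπ, let C₀ ≥ 0, let r ∈ ℂ with |r| ≤ C₀ τ³ δ², and let c : ℕ → ℂ. Then for every n ∈ ℕ with n ≥ 1, |∑_{k=0}^{n} r e^{-ikτδ} c_k| ≤ (2γπ C₀ / sin(γπ)) · τ² |δ| · (∑_{k=0}^{n−1} |c_k − c_{k+1}| + |c_n|). -/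
/-!
The phases `z ^ k`, with `z = e^{-iτδ}`, have bounded partial sums although there is no decay: a
geometric sum on the unit circle is at most `2 / ‖z - 1‖ = 1 / |sin (τδ/2)|`, and concavity of the
sine turns `τ|δ|/2 ≤ γπ` into `sin (τ|δ|/2) ≥ (τ|δ|/2) · sin (γπ) / (γπ)`. Summation by parts moves
the differences onto the slowly varying coefficients, so the factor `n` of the termwise estimate is
replaced by a multiple of `1 / (τ|δ|)`, and `τ³δ² / (τ|δ|) = τ²|δ|`.
-/

section SummationByParts

open Finset

/- `Finset.sum_range_by_parts` forms the partial sums of the vectors; here it is the scalars that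
cancel. -/
theorem sum_range_succ_smul_by_parts {R M : Type*} [Semiring R] [AddCommGroup M] [Module R M]
    (w : ℕ → R) (c : ℕ → M) (n : ℕ) :
    ∑ k ∈ range (n + 1), w k • c k =
      ∑ k ∈ range n, (∑ j ∈ range (k + 1), w j) • (c k - c (k + 1)) +
        (∑ j ∈ range (n + 1), w j) • c n := by
  induction n with
  | zero => simp
  | succ n ih =>
    rw [sum_range_succ, ih, sum_range_succ w (n + 1), add_smul,
      sum_range_succ (fun k => (∑ j ∈ range (k + 1), w j) • (c k - c (k + 1))), smul_sub]
    abel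

theorem norm_sum_range_succ_smul_le {R E : Type*} [SeminormedRing R] [SeminormedAddCommGroup E]
    [Module R E] [IsBoundedSMul R E] {w : ℕ → R} {B : ℝ} {n : ℕ}
    (hB : ∀ m ≤ n, ‖∑ j ∈ range (m + 1), w j‖ ≤ B) (c : ℕ → E) :
    ‖∑ k ∈ range (n + 1), w k • c k‖ ≤
      B * (∑ k ∈ range n, ‖c k - c (k + 1)‖ + ‖c n‖) := by
  have smul_le (m : ℕ) (hm : m ≤ n) (v : E) : ‖(∑ j ∈ range (m + 1), w j) • v‖ ≤ B * ‖v‖ :=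
    (norm_smul_le _ _).trans (mul_le_mul_of_nonneg_right (hB m hm) (norm_nonneg v))
  rw [sum_range_succ_smul_by_parts, mul_add, mul_sum]
  exact norm_add_le_of_le
    (norm_sum_le_of_le _ fun k hk => smul_le k (mem_range.1 hk).le _) (smul_le n le_rfl _)

end SummationByParts

section PhaseCancellation

open Finset Real

theorem norm_geom_sum_le_two_div {K : Type*} [NormedDivisionRing K] {z : K} (hz : ‖z‖ ≤ 1)
    (hz_ne : z ≠ 1) (m : ℕ) : ‖∑ j ∈ range m, z ^ j‖ ≤ 2 / ‖z - 1‖ := by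
  have numerator_le : ‖z ^ m - 1‖ ≤ 2 :=
    calc ‖z ^ m - 1‖ ≤ ‖z‖ ^ m + 1 := by simpa using norm_sub_le (z ^ m) 1
      _ ≤ 1 + 1 := by gcongr; exact pow_le_one₀ (norm_nonneg z) hz
      _ = 2 := one_add_one_eq_two
  rw [geom_sum_eq hz_ne, norm_div]
  gcongr

theorem norm_sum_exp_neg_I_mul_le_inv_abs_sin {x : ℝ} (hx : sin (x / 2) ≠ 0) (m : ℕ) :
    ‖∑ j ∈ range m, Complex.exp (-(Complex.I * j * x))‖ ≤ |sin (x / 2)|⁻¹ := by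
  set z : ℂ := Complex.exp (Complex.I * (-x : ℝ)) with hz
  have exp_eq_pow (j : ℕ) : Complex.exp (-(Complex.I * j * x)) = z ^ j := by
    rw [hz, ← Complex.exp_nat_mul]
    congr 1
    push_cast
    ring
  have norm_z_sub_one : ‖z - 1‖ = 2 * |sin (x / 2)| := by
    rw [hz, Complex.norm_exp_I_mul_ofReal_sub_one, neg_div, sin_neg]
    simp
  have z_ne_one : z ≠ 1 := by
    rw [← sub_ne_zero, ← norm_ne_zero_iff, norm_z_sub_one]
    positivity
  calc ‖∑ j ∈ range m, Complex.exp (-(Complex.I * j * x))‖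
      = ‖∑ j ∈ range m, z ^ j‖ := by simp only [exp_eq_pow]
    _ ≤ 2 / ‖z - 1‖ :=
        norm_geom_sum_le_two_div (Complex.norm_exp_I_mul_ofReal _).le z_ne_one m
    _ = |sin (x / 2)|⁻¹ := by rw [norm_z_sub_one]; field_simp

theorem mul_sin_le_mul_sin {s a : ℝ} (hs : 0 ≤ s) (hsa : s ≤ a) (ha : a ≤ π) :
    s * sin a ≤ a * sin s := by
  obtain rfl | hs_pos := hs.eq_or_lt
  · simp
  have ha_pos : 0 < a := hs_pos.trans_le hsa
  have chord_le : s / a * sin a ≤ sin s := by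
    simpa [ha_pos.ne'] using strictConcaveOn_sin_Icc.concaveOn.2 ⟨le_rfl, pi_pos.le⟩
      ⟨ha_pos.le, ha⟩ (sub_nonneg.2 ((div_le_one ha_pos).2 hsa)) (by positivity : 0 ≤ s / a)
      (sub_add_cancel 1 (s / a))
  calc s * sin a = a * (s / a * sin a) := by field_simp
    _ ≤ a * sin s := by gcongr

theorem norm_sum_exp_neg_I_mul_le_of_abs_le {x a : ℝ} (hx : x ≠ 0) (hxa : |x| / 2 ≤ a)
    (ha : a < π) (m : ℕ) :
    ‖∑ j ∈ range m, Complex.exp (-(Complex.I * j * x))‖ ≤ 2 * a / sin a / |x| := by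
  have half_pos : 0 < |x| / 2 := by positivity
  have sin_a_pos : 0 < sin a := sin_pos_of_pos_of_lt_pi (half_pos.trans_le hxa) ha
  have sin_half_pos : 0 < sin (|x| / 2) := sin_pos_of_pos_of_lt_pi half_pos (hxa.trans_lt ha)
  have abs_half : |x / 2| = |x| / 2 := by rw [abs_div, abs_two]
  have abs_sin_half : |sin (x / 2)| = sin (|x| / 2) := by
    rw [abs_sin_eq_sin_abs_of_abs_le_pi (abs_half.trans_le (hxa.trans ha.le)), abs_half]
  have sin_half_ne : sin (x / 2) ≠ 0 := abs_pos.1 (abs_sin_half ▸ sin_half_pos)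
  calc ‖∑ j ∈ range m, Complex.exp (-(Complex.I * j * x))‖
      ≤ (sin (|x| / 2))⁻¹ := abs_sin_half ▸ norm_sum_exp_neg_I_mul_le_inv_abs_sin sin_half_ne m
    _ ≤ 2 * a / sin a / |x| := by
        rw [div_div, inv_eq_one_div, div_le_div_iff₀ sin_half_pos (by positivity)]
        linarith [mul_sin_le_mul_sin half_pos.le hxa ha.le]

end PhaseCancellation

theorem rco_summation_by_parts_bound_general {E : Type*} [SeminormedAddCommGroup E]
    [NormedSpace ℂ E] {γ τ δ C₀ : ℝ} (hγ1 : γ < 1) (hτ : 0 < τ) (hδ : δ ≠ 0)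
    (hup : τ * |δ| / 2 ≤ γ * Real.pi) {r : ℂ} (hr : ‖r‖ ≤ C₀ * τ ^ 3 * δ ^ 2)
    (c : ℕ → E) (n : ℕ) :
    ‖∑ k ∈ Finset.range (n + 1), (r * Complex.exp (-(Complex.I * k * τ * δ))) • c k‖
      ≤ (2 * γ * Real.pi * C₀ / Real.sin (γ * Real.pi)) * τ ^ 2 * |δ| *
          ((∑ k ∈ Finset.range n, ‖c k - c (k + 1)‖) + ‖c n‖) := by
  have abs_phase : |τ * δ| = τ * |δ| := by rw [abs_mul, abs_of_pos hτ]
  have partial_sum_le (m : ℕ) :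
      ‖∑ j ∈ Finset.range m, Complex.exp (-(Complex.I * j * τ * δ))‖
        ≤ 2 * (γ * Real.pi) / Real.sin (γ * Real.pi) / (τ * |δ|) := by
    simpa only [abs_phase, Complex.ofReal_mul, mul_assoc] using
      norm_sum_exp_neg_I_mul_le_of_abs_le (mul_ne_zero hτ.ne' hδ) (abs_phase ▸ hup)
        (mul_lt_of_lt_one_left Real.pi_pos hγ1) m
  have weighted_partial_sum_le (m : ℕ) :
      ‖∑ j ∈ Finset.range m, r * Complex.exp (-(Complex.I * j * τ * δ))‖
        ≤ (2 * γ * Real.pi * C₀ / Real.sin (γ * Real.pi)) * τ ^ 2 * |δ| := by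
    rw [← Finset.mul_sum, norm_mul]
    calc _ ≤ C₀ * τ ^ 3 * δ ^ 2 * (2 * (γ * Real.pi) / Real.sin (γ * Real.pi) / (τ * |δ|)) :=
          mul_le_mul hr (partial_sum_le m) (norm_nonneg _) ((norm_nonneg r).trans hr)
      _ = _ := by rw [← sq_abs δ]; field_simp
  exact norm_sum_range_succ_smul_le (fun m _ => weighted_partial_sum_le (m + 1)) c

/-- Abstract central RCO estimate ((3.1.31) and (3.1.33)): for `γ ∈ (0,1)`,
`0 < τ|δ|/2 ≤ γπ`, `|r| ≤ C₀ τ³ δ²` and coefficients `c : ℕ → ℂ`, summation by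
parts and phase cancellation give, for `n ≥ 1`,
`|∑_{k=0}^{n} r e^{-ikτδ} c_k|
  ≤ (2γπC₀/sin(γπ)) τ² |δ| (∑_{k=0}^{n-1} |c_k − c_{k+1}| + |c_n|)`. -/
theorem rco_summation_by_parts_bound
    (γ : ℝ) (hγ0 : 0 < γ) (hγ1 : γ < 1) (τ δ : ℝ) (hτ : 0 < τ)
    (hlow : 0 < τ * |δ| / 2) (hup : τ * |δ| / 2 ≤ γ * Real.pi)
    (C₀ : ℝ) (hC₀ : 0 ≤ C₀) (r : ℂ) (hr : ‖r‖ ≤ C₀ * τ ^ 3 * δ ^ 2)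
    (c : ℕ → ℂ) (n : ℕ) (hn : 1 ≤ n) :
    ‖∑ k ∈ Finset.range (n + 1), r * Complex.exp (-(Complex.I * k * τ * δ)) * c k‖
      ≤ (2 * γ * Real.pi * C₀ / Real.sin (γ * Real.pi)) * τ ^ 2 * |δ| *
          ((∑ k ∈ Finset.range n, ‖c k - c (k + 1)‖) + ‖c n‖) := by
  have hδ : δ ≠ 0 := by rintro rfl; simp at hlow
  exact rco_summation_by_parts_bound_general hγ1 hτ hδ hup hr c n
end
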